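/- Consider a probability space (Ω, 𝔉, ℙ) and, for i ∈ {1,…,n} with n ≥ 1, event pairs (A_i, B_i) that are mutually independent across i and identically distributed, i.e. ℙ(A_i) = ℙ(A_1), ℙ(B_i) = ℙ(B_1) and ℙ(A_i ∩ B_i) = ℙ(A_1 ∩ B_1) for all i, with ℙ(B_1) > 0. Let E_n = (⋃_{i=1}^{n-1} (A_i ∩ B_i ∩ ⋂_{j<i} B_jᶜ)) ∪ (A_n ∩ ⋂_{j=1}^{n-1} B_jᶜ). Then min(ℙ(A_1), ℙ(A_1|B_1)) ≤ ℙ(E_n) ≤ max(ℙ(A_1), ℙ(A_1|B_1)); that is, the system outage probability is a convex combination (a weighted average) of the single-resource outage probability P_1 and the infinite-resource outage probability P_∞, with weights (1−ℙ(B_1))^{n−1} and 1−(1−ℙ(B_1))^{n−1}. -/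

import Mathlib

open MeasureTheory ProbabilityTheory Filter

/-!
Split the sample space according to the first resource `i < m` that is predicted to be good, or
none. By independence across resources, first selecting resource `i` contributes
`ℙ(A i ∩ B i) * ℙ(no earlier B) = ℙ(A i | B i) * ℙ(i is selected first)`, while the fallback to
resource `m` contributes `ℙ(A m) * ℙ(no B)`. If the conditional probabilities all equal `c`, the
outage probability is thus the average of `c` and `ℙ(A m)` in which `ℙ(A m)` has weight
`ℙ(no B) = ∏ j < m, ℙ((B j)ᶜ)`. Identical distribution turns this weight into `(1 - ℙ(B 0)) ^ m`.
-/

section GreedyOutage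

variable {Ω : Type*}

/-- The event `E_n` of the paper for `n = m + 1` resources numbered `0, …, m`: the greedy user
takes the first resource `i < m` for which `B i` occurs, or else resource `m`, and the resource
taken is in outage. Whether `B m` occurs is irrelevant, as resource `m` is the fallback. -/
def greedyOutage (A B : ℕ → Set Ω) (m : ℕ) : Set Ω :=
  (⋃ i < m, (A i ∩ B i ∩ ⋂ j < i, (B j)ᶜ)) ∪ (A m ∩ ⋂ j < m, (B j)ᶜ)

lemma greedyOutage_inter_disjointed (A B : ℕ → Set Ω) {i m : ℕ} (hi : i < m) :
    greedyOutage A B m ∩ disjointed B i = A i ∩ disjointed B i := by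
  ext x
  simp only [greedyOutage, disjointed_eq_inter_compl, Set.mem_inter_iff, Set.mem_union,
    Set.mem_iUnion, Set.mem_iInter, Set.mem_compl_iff, exists_prop]
  refine and_congr_left fun ⟨hxi, hfirst⟩ => ⟨?_, fun hx => .inl ⟨i, hi, ⟨hx, hxi⟩, hfirst⟩⟩
  rintro (⟨k, -, ⟨hxA, hxk⟩, hfirst'⟩ | ⟨-, hnone⟩)
  · have hki : k = i :=
      le_antisymm (not_lt.1 fun h => hfirst' i h hxi) (not_lt.1 fun h => hfirst k h hxk)
    exact hki ▸ hxA
  · exact absurd hxi (hnone i hi)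

lemma greedyOutage_inter_biInter_compl (A B : ℕ → Set Ω) (m : ℕ) :
    greedyOutage A B m ∩ ⋂ j < m, (B j)ᶜ = A m ∩ ⋂ j < m, (B j)ᶜ := by
  ext x
  simp only [greedyOutage, Set.mem_inter_iff, Set.mem_union, Set.mem_iUnion, Set.mem_iInter,
    Set.mem_compl_iff, exists_prop]
  refine and_congr_left fun hnone => ⟨?_, fun hx => .inr ⟨hx, hnone⟩⟩
  rintro (⟨k, hk, ⟨-, hxk⟩, -⟩ | ⟨hxA, -⟩)
  · exact absurd hxk (hnone k hk)
  · exact hxA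

variable [MeasurableSpace Ω] {μ : Measure Ω}

lemma sum_measure_inter_disjointed_add_measure_inter_biInter_compl {B : ℕ → Set Ω}
    (hB : ∀ i, MeasurableSet (B i)) (E : Set Ω) (m : ℕ) :
    ∑ i ∈ Finset.range m, μ (E ∩ disjointed B i) + μ (E ∩ ⋂ j < m, (B j)ᶜ) = μ E := by
  induction m with
  | zero => simp
  | succ m ih =>
    have hhit : E ∩ disjointed B m = (E ∩ ⋂ j < m, (B j)ᶜ) ∩ B m := by
      rw [disjointed_eq_inter_compl, Set.inter_comm (B m), Set.inter_assoc]
    have hmiss : E ∩ ⋂ j < m + 1, (B j)ᶜ = (E ∩ ⋂ j < m, (B j)ᶜ) \ B m := by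
      rw [Set.biInter_lt_succ, ← Set.inter_assoc, Set.sdiff_eq]
    rw [Finset.sum_range_succ, add_assoc, hhit, hmiss, measure_inter_add_sdiff _ (hB m), ih]

lemma measure_inter_biInter_eq_mul_prod_of_iIndep {ι : Type*} {𝓕 : ι → MeasurableSpace Ω}
    (hindep : iIndep 𝓕 μ) {i : ι} {S : Finset ι} (hi : i ∉ S) {D : Set Ω}
    (hD : MeasurableSet[𝓕 i] D) {C : ι → Set Ω} (hC : ∀ j ∈ S, MeasurableSet[𝓕 j] (C j)) :
    μ (D ∩ ⋂ j ∈ S, C j) = μ D * ∏ j ∈ S, μ (C j) := by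
  classical
  have hupdate : ∀ j ∈ S, Function.update C i D j = C j := fun j hj =>
    Function.update_of_ne (ne_of_mem_of_not_mem hj hi) _ _
  have hmeas : ∀ j ∈ insert i S, MeasurableSet[𝓕 j] (Function.update C i D j) := by
    refine Finset.forall_mem_insert _ _ _ |>.2 ⟨by simpa using hD, fun j hj => ?_⟩
    simpa only [hupdate j hj] using hC j hj
  have hprod := hindep.meas_biInter hmeas
  rwa [Finset.set_biInter_insert, Finset.prod_insert hi, Function.update_self,
    Set.iInter₂_congr hupdate, Finset.prod_congr rfl fun j hj => by rw [hupdate j hj]] at hprod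

variable {𝓕 : ℕ → MeasurableSpace Ω} {A B : ℕ → Set Ω} {c : ENNReal}

lemma measure_inter_biInter_compl_eq_mul_prod
    (hindep : iIndep 𝓕 μ) (h𝓕B : ∀ i, MeasurableSet[𝓕 i] (B i)) {i : ℕ} {D : Set Ω}
    (hD : MeasurableSet[𝓕 i] D) :
    μ (D ∩ ⋂ j < i, (B j)ᶜ) = μ D * ∏ j ∈ Finset.range i, μ (B j)ᶜ := by
  simpa only [Finset.mem_range] using
    measure_inter_biInter_eq_mul_prod_of_iIndep hindep Finset.notMem_range_self hD
      (C := fun j => (B j)ᶜ) fun j _ => (h𝓕B j).compl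

lemma measure_inter_disjointed_eq_mul
    (hindep : iIndep 𝓕 μ) (h𝓕B : ∀ i, MeasurableSet[𝓕 i] (B i)) {i : ℕ}
    (h𝓕A : MeasurableSet[𝓕 i] (A i)) (hAB : μ (A i ∩ B i) = c * μ (B i)) :
    μ (A i ∩ disjointed B i) = c * μ (disjointed B i) := by
  rw [disjointed_eq_inter_compl, ← Set.inter_assoc,
    measure_inter_biInter_compl_eq_mul_prod hindep h𝓕B (h𝓕A.inter (h𝓕B i)),
    measure_inter_biInter_compl_eq_mul_prod hindep h𝓕B (h𝓕B i), hAB, mul_assoc]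

variable [IsProbabilityMeasure μ]

lemma sum_measure_disjointed_add_prod_measure_compl (hB : ∀ i, MeasurableSet (B i))
    (hindep : iIndep 𝓕 μ) (h𝓕B : ∀ i, MeasurableSet[𝓕 i] (B i)) (m : ℕ) :
    ∑ i ∈ Finset.range m, μ (disjointed B i) + ∏ j ∈ Finset.range m, μ (B j)ᶜ = 1 := by
  have hnone : μ (⋂ j < m, (B j)ᶜ) = ∏ j ∈ Finset.range m, μ (B j)ᶜ := by
    simpa only [Set.univ_inter, measure_univ, one_mul] using
      measure_inter_biInter_compl_eq_mul_prod hindep h𝓕B (i := m) MeasurableSet.univ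
  simpa only [hnone, Set.univ_inter, measure_univ] using
    sum_measure_inter_disjointed_add_measure_inter_biInter_compl (μ := μ) hB Set.univ m

theorem measure_greedyOutage (hB : ∀ i, MeasurableSet (B i))
    (hindep : iIndep 𝓕 μ) (h𝓕A : ∀ i, MeasurableSet[𝓕 i] (A i))
    (h𝓕B : ∀ i, MeasurableSet[𝓕 i] (B i)) {m : ℕ}
    (hAB : ∀ i < m, μ (A i ∩ B i) = c * μ (B i)) :
    μ (greedyOutage A B m) =
      (∏ j ∈ Finset.range m, μ (B j)ᶜ) * μ (A m) +
        (1 - ∏ j ∈ Finset.range m, μ (B j)ᶜ) * c := by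
  have hselected : ∀ i ∈ Finset.range m,
      μ (greedyOutage A B m ∩ disjointed B i) = c * μ (disjointed B i) := fun i hi => by
    rw [greedyOutage_inter_disjointed A B (Finset.mem_range.1 hi),
      measure_inter_disjointed_eq_mul hindep h𝓕B (h𝓕A i) (hAB i (Finset.mem_range.1 hi))]
  have hfallback : μ (greedyOutage A B m ∩ ⋂ j < m, (B j)ᶜ) =
      μ (A m) * ∏ j ∈ Finset.range m, μ (B j)ᶜ := by
    rw [greedyOutage_inter_biInter_compl,
      measure_inter_biInter_compl_eq_mul_prod hindep h𝓕B (h𝓕A m)]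
  have hweight : ∑ i ∈ Finset.range m, μ (disjointed B i) =
      1 - ∏ j ∈ Finset.range m, μ (B j)ᶜ :=
    ENNReal.eq_sub_of_add_eq (ENNReal.prod_ne_top fun _ _ => measure_ne_top _ _)
      (sum_measure_disjointed_add_prod_measure_compl hB hindep h𝓕B m)
  rw [← sum_measure_inter_disjointed_add_measure_inter_biInter_compl hB (greedyOutage A B m) m,
    Finset.sum_congr rfl hselected, ← Finset.mul_sum, hfallback, hweight]
  ring

theorem stmt_14_general (hB : ∀ i, MeasurableSet (B i))
    (hindep : iIndep 𝓕 μ) (h𝓕A : ∀ i, MeasurableSet[𝓕 i] (A i))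
    (h𝓕B : ∀ i, MeasurableSet[𝓕 i] (B i)) {m : ℕ}
    (hAB : ∀ i < m, μ (A i ∩ B i) = c * μ (B i)) :
    min (μ (A m)) c ≤ μ (greedyOutage A B m) ∧ μ (greedyOutage A B m) ≤ max (μ (A m)) c := by
  have hweight : ∏ j ∈ Finset.range m, μ (B j)ᶜ ≤ 1 := Finset.prod_le_one' fun _ _ => prob_le_one
  rw [measure_greedyOutage hB hindep h𝓕A h𝓕B hAB]
  exact convex_uIcc (𝕜 := ENNReal) (μ (A m)) c Set.left_mem_uIcc Set.right_mem_uIcc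
    zero_le zero_le (add_tsub_cancel_of_le hweight)

end GreedyOutage

/-- The outage probability of the greedy `n`-resource system is a weighted
average of the single-resource outage probability `P(A₀)` and the
infinite-resource outage probability `P(A₀ | B₀)`, hence lies between their
minimum and maximum. -/
theorem stmt_14 {Ω : Type*} [MeasurableSpace Ω] (μ : Measure Ω) [IsProbabilityMeasure μ]
    (A B : ℕ → Set Ω)
    (hA : ∀ i, MeasurableSet (A i)) (hB : ∀ i, MeasurableSet (B i))
    (hindep : iIndep (fun i => MeasurableSpace.generateFrom {A i, B i}) μ)
    (hAid : ∀ i, μ (A i) = μ (A 0))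
    (hBid : ∀ i, μ (B i) = μ (B 0))
    (hABid : ∀ i, μ (A i ∩ B i) = μ (A 0 ∩ B 0))
    (n : ℕ) (hn : 1 ≤ n)
    (hB0 : 0 < μ (B 0)) :
    min (μ (A 0)) (μ (A 0 ∩ B 0) / μ (B 0))
        ≤ μ ((⋃ i < n - 1, (A i ∩ B i ∩ ⋂ j < i, (B j)ᶜ)) ∪ (A (n - 1) ∩ ⋂ j < n - 1, (B j)ᶜ)) ∧
      μ ((⋃ i < n - 1, (A i ∩ B i ∩ ⋂ j < i, (B j)ᶜ)) ∪ (A (n - 1) ∩ ⋂ j < n - 1, (B j)ᶜ))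
        ≤ max (μ (A 0)) (μ (A 0 ∩ B 0) / μ (B 0)) := by
  have hAB (i : ℕ) : μ (A i ∩ B i) = μ (A 0 ∩ B 0) / μ (B 0) * μ (B i) := by
    rw [hABid, hBid i, ENNReal.div_mul_cancel hB0.ne' (measure_ne_top _ _)]
  simpa only [hAid (n - 1), greedyOutage] using
    stmt_14_general hB hindep (fun _ => MeasurableSpace.measurableSet_generateFrom (by simp))
      (fun _ => MeasurableSpace.measurableSet_generateFrom (by simp)) (m := n - 1) fun i _ => hAB i
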